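/- Let p₁, p₂, p₃ be rational primes such that p₁ ≡ p₂ ≡ p₃ ≡ 2 (mod 9) or p₁ ≡ p₂ ≡ p₃ ≡ 5 (mod 9). Then the equation p₁²x³ + y³ = p₂²p₃²z³ has no nontrivial ℚ₃-solution. -/

import Mathlib

/-! A nontrivial `ℚ₃`-solution can be rescaled to a `ℤ₃`-solution with a coordinate equal to `1`, so
it suffices to exclude such solutions modulo `9`. There every cube is `0` or `±1`, and the classes
of `(ℤ/9)ˣ / {±1}` are represented by `1`, `4` and `7`, of which no nonempty signed subset sum
vanishes. If all `pᵢ ≡ r`, the coefficients `p₁²`, `1`, `p₂²p₃²` reduce to `r²`, `1`, `r⁴`, which lie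
in distinct classes of this group of order `3` as soon as the unit `r` is not `±1`. -/

theorem exists_eq_smul_algebraMap_comp {A K ι : Type*} [CommRing A] [IsDomain A] [ValuationRing A]
    [Field K] [Algebra A K] [IsFractionRing A K] [Finite ι] {x : ι → K} (hx : x ≠ 0) :
    ∃ (c : K) (y : ι → A), c ≠ 0 ∧ (∃ i, y i = 1) ∧ x = c • (algebraMap A K ∘ y) := by
  obtain ⟨j, hj⟩ := Function.ne_iff.mp hx
  have : Nonempty ι := ⟨j⟩
  let v := ValuationRing.valuation A K
  obtain ⟨i, hi⟩ := Finite.exists_max fun k => v (x k)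
  have hxi : x i ≠ 0 := by
    intro h0
    exact hj (v.zero_iff.mp (le_zero_iff.mp (by simpa only [h0, map_zero] using hi j)))
  have hint (k : ι) : ∃ a : A, algebraMap A K a = x k / x i := by
    rw [← ValuationRing.mem_integer_iff, Valuation.mem_integer_iff, map_div₀]
    exact div_le_one_of_le₀ (hi k) zero_le
  choose y hy using hint
  refine ⟨x i, y, hxi, ⟨i, IsFractionRing.injective A K ?_⟩, funext fun k => ?_⟩
  · rw [hy, div_self hxi, map_one]
  · simp only [Pi.smul_apply, Function.comp_apply, smul_eq_mul, hy, mul_div_cancel₀ _ hxi]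

theorem eq_zero_of_sum_mul_pow_eq_zero {A K R ι : Type*} [CommRing A] [IsDomain A]
    [ValuationRing A] [Field K] [Algebra A K] [IsFractionRing A K] [CommRing R] [Fintype ι]
    (f : A →+* R) {a : ι → A} {d : ℕ}
    (hf : ∀ t : ι → R, ∑ i, f (a i) * t i ^ d = 0 → ∀ i, t i ≠ 1)
    {x : ι → K} (hx : ∑ i, algebraMap A K (a i) * x i ^ d = 0) : x = 0 := by
  by_contra hx0
  obtain ⟨c, y, hc, ⟨i, hi⟩, rfl⟩ := exists_eq_smul_algebraMap_comp (A := A) hx0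
  have hK : c ^ d * algebraMap A K (∑ j, a j * y j ^ d) = 0 := by
    rw [← hx, map_sum, Finset.mul_sum]
    refine Finset.sum_congr rfl fun j _ => ?_
    simp only [Pi.smul_apply, Function.comp_apply, smul_eq_mul, map_mul, map_pow]
    ring
  have hA : ∑ j, a j * y j ^ d = 0 := by
    simpa only [mul_eq_zero, pow_ne_zero d hc, false_or,
      FaithfulSMul.algebraMap_eq_zero_iff] using hK
  have hR : ∑ j, f (a j) * f (y j) ^ d = 0 := by
    simpa only [map_sum, map_mul, map_pow, map_zero] using congrArg f hA
  exact hf (f ∘ y) hR i (by simp only [Function.comp_apply, hi, map_one])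

theorem zmod_nine_cube_eq_zero_or_cube_sq_eq_one (t : ZMod (3 ^ 2)) :
    t ^ 3 = 0 ∨ (t ^ 3) ^ 2 = 1 := by
  decide +revert

set_option synthInstance.maxSize 1000 in
set_option maxRecDepth 100000 in
theorem zmod_nine_eq_zero_of_add_add_eq_zero : ∀ u v w : ZMod (3 ^ 2),
    (u = 0 ∨ IsUnit u) → (v = 0 ∨ IsUnit v) → (w = 0 ∨ IsUnit w) →
    (u ^ 2 = v ^ 2 → u = 0) → (u ^ 2 = w ^ 2 → u = 0) → (v ^ 2 = w ^ 2 → v = 0) →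
    u + v + w = 0 → u = 0 ∧ v = 0 ∧ w = 0 := by
  decide

-- Squaring on `(ℤ/9)ˣ` has kernel `{±1}`, the subgroup of cubes, so injectivity of the squares says
-- that the coefficients are pairwise distinct modulo cubes.
theorem zmod_nine_cube_eq_zero_of_sum_mul_cube_eq_zero {a t : Fin 3 → ZMod (3 ^ 2)}
    (ha : ∀ i, IsUnit (a i)) (hinj : Function.Injective fun i => a i ^ 2)
    (h : ∑ i, a i * t i ^ 3 = 0) (i : Fin 3) : t i ^ 3 = 0 := by
  have hzero_or_unit (j : Fin 3) : a j * t j ^ 3 = 0 ∨ IsUnit (a j * t j ^ 3) := by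
    rcases zmod_nine_cube_eq_zero_or_cube_sq_eq_one (t j) with ht | ht
    · exact .inl (by rw [ht, mul_zero])
    · exact .inr ((ha j).mul (.of_pow_eq_one ht two_ne_zero))
  have hsq {j k : Fin 3} (hjk : j ≠ k) (heq : (a j * t j ^ 3) ^ 2 = (a k * t k ^ 3) ^ 2) :
      a j * t j ^ 3 = 0 := by
    rcases zmod_nine_cube_eq_zero_or_cube_sq_eq_one (t j) with htj | htj
    · rw [htj, mul_zero]
    rw [mul_pow, htj, mul_one] at heq
    rcases zmod_nine_cube_eq_zero_or_cube_sq_eq_one (t k) with htk | htk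
    · have hunit : IsUnit (0 : ZMod (3 ^ 2)) := by
        simpa only [heq, htk, mul_zero, zero_pow two_ne_zero] using (ha j).pow 2
      exact absurd hunit (by decide)
    · rw [mul_pow, htk, mul_one] at heq
      exact absurd (hinj heq) hjk
  have hterm : a i * t i ^ 3 = 0 := by
    rw [Fin.sum_univ_three] at h
    obtain ⟨h₀, h₁, h₂⟩ := zmod_nine_eq_zero_of_add_add_eq_zero _ _ _ (hzero_or_unit 0)
      (hzero_or_unit 1) (hzero_or_unit 2) (hsq (by decide)) (hsq (by decide)) (hsq (by decide)) h
    fin_cases i <;> assumption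
  exact (ha i).mul_right_eq_zero.mp hterm

theorem zmod_nine_injective_sq_of_sq_ne_one (r : ZMod (3 ^ 2)) (hr : IsUnit r) (hr' : r ^ 2 ≠ 1) :
    Function.Injective fun i => ![r ^ 2, 1, -(r ^ 2 * r ^ 2)] i ^ 2 := by
  decide +revert

theorem padic_three_eq_zero_of_sum_mul_cube_eq_zero {a : Fin 3 → ℤ_[3]}
    (ha : ∀ i, IsUnit (PadicInt.toZModPow 2 (a i)))
    (hinj : Function.Injective fun i => PadicInt.toZModPow 2 (a i) ^ 2)
    {x : Fin 3 → ℚ_[3]} (hx : ∑ i, (a i : ℚ_[3]) * x i ^ 3 = 0) : x = 0 := by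
  refine eq_zero_of_sum_mul_pow_eq_zero (PadicInt.toZModPow 2) (a := a) (d := 3)
    (fun t ht i hi => ?_) hx
  have hcube := zmod_nine_cube_eq_zero_of_sum_mul_cube_eq_zero ha hinj ht i
  rw [hi, one_pow] at hcube
  exact absurd hcube (by decide)

theorem toZModPow_natCast_eq_of_modEq {p n a b : ℕ} [Fact p.Prime] (h : a ≡ b [MOD p ^ n]) :
    PadicInt.toZModPow n (a : ℤ_[p]) = b := by
  rw [map_natCast, (ZMod.natCast_eq_natCast_iff a b _).mpr h]

theorem stmt10_general {p₁ p₂ p₃ : ℤ_[3]} {r : ZMod (3 ^ 2)} (hr : IsUnit r) (hr' : r ^ 2 ≠ 1)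
    (h₁ : PadicInt.toZModPow 2 p₁ = r) (h₂ : PadicInt.toZModPow 2 p₂ = r)
    (h₃ : PadicInt.toZModPow 2 p₃ = r) :
    ¬ ∃ x y z : ℚ_[3], ¬(x = 0 ∧ y = 0 ∧ z = 0) ∧
        (p₁ : ℚ_[3]) ^ 2 * x ^ 3 + y ^ 3 = (p₂ : ℚ_[3]) ^ 2 * (p₃ : ℚ_[3]) ^ 2 * z ^ 3 := by
  rintro ⟨x, y, z, hne, h⟩
  let a : Fin 3 → ℤ_[3] := ![p₁ ^ 2, 1, -(p₂ ^ 2 * p₃ ^ 2)]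
  have hred (i : Fin 3) : PadicInt.toZModPow 2 (a i) = ![r ^ 2, 1, -(r ^ 2 * r ^ 2)] i := by
    fin_cases i <;> simp [a, h₁, h₂, h₃]
  have hunit (i : Fin 3) : IsUnit (PadicInt.toZModPow 2 (a i)) := by
    rw [hred]
    fin_cases i <;> simp [hr]
  have hinj : Function.Injective fun i => PadicInt.toZModPow 2 (a i) ^ 2 := by
    simpa only [hred] using zmod_nine_injective_sq_of_sq_ne_one r hr hr'
  have hsum : ∑ i, (a i : ℚ_[3]) * ![x, y, z] i ^ 3 = 0 := by
    simp [Fin.sum_univ_three, a, h]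
  have hxyz := padic_three_eq_zero_of_sum_mul_cube_eq_zero hunit hinj hsum
  exact hne ⟨congrFun hxyz 0, congrFun hxyz 1, congrFun hxyz 2⟩

/-- if `p₁, p₂, p₃` are rational primes all `≡ 2 (mod 9)` or all
`≡ 5 (mod 9)`, then `p₁² x³ + y³ = p₂² p₃² z³` has no nontrivial `ℚ₃`-solution. -/
theorem stmt10 (p₁ p₂ p₃ : ℕ) (hp₁ : p₁.Prime) (hp₂ : p₂.Prime) (hp₃ : p₃.Prime)
    (hmod : (p₁ % 9 = 2 ∧ p₂ % 9 = 2 ∧ p₃ % 9 = 2) ∨ (p₁ % 9 = 5 ∧ p₂ % 9 = 5 ∧ p₃ % 9 = 5)) :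
    ¬ ∃ x y z : ℚ_[3], ¬(x = 0 ∧ y = 0 ∧ z = 0) ∧
        (p₁ : ℚ_[3]) ^ 2 * x ^ 3 + y ^ 3 = (p₂ : ℚ_[3]) ^ 2 * (p₃ : ℚ_[3]) ^ 2 * z ^ 3 := by
  rcases hmod with ⟨h₁, h₂, h₃⟩ | ⟨h₁, h₂, h₃⟩
  · exact mod_cast stmt10_general (r := (2 : ℕ)) (by decide) (by decide)
      (toZModPow_natCast_eq_of_modEq h₁) (toZModPow_natCast_eq_of_modEq h₂)
      (toZModPow_natCast_eq_of_modEq h₃)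
  · exact mod_cast stmt10_general (r := (5 : ℕ)) (by decide) (by decide)
      (toZModPow_natCast_eq_of_modEq h₁) (toZModPow_natCast_eq_of_modEq h₂)
      (toZModPow_natCast_eq_of_modEq h₃)
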